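/- Let X be a finite connected graph of genus g. The reciprocal of the Ihara zeta function of X has Taylor expansion at s = 1 given by ζ(s, X)^{-1} = 2^g · (−1)^{g+1} · (g−1) · |Jac(X)| · (s−1)^g + O((s−1)^{g+1}), where |Jac(X)| is the number of spanning trees of X. -/

import Mathlib

/-! The reciprocal zeta function is the determinant `det (I - W)` of size `|H| = 2|E|`. Bass's formula
(`bass`) rewrites it as `(1 - s²)^(|E| - |V|) det (I - sA + s²(Q - I))`: with `S`, `T` the start and
end incidence matrices and `J` the edge inversion, `W = s (Tᵀ S - J)`, and since `J² = I` the factor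
`I + sJ` is invertible for `s² ≠ 1`, so the Weinstein-Aronszajn identity passes from half-edges to
vertices.

It remains to expand the vertex determinant to first order at `s = 1`. The row sums of
`I - sA + s²(Q - I)` are `(1 - s)(1 - s(q_v - 1))`, so replacing one column by the sum of all
columns pulls out a factor `1 - s` (`det_bassMat`). At `s = 1` the remaining cofactor has the
Laplacian in all other columns; adding up the rows reduces it to `∑ (2 - q_v) = 2|V| - 2|E|` times
a principal minor of the Laplacian (`cofac_one`). By the matrix-tree theorem (`matrixTree`) that
minor is the number of spanning trees. It is proved here from the Cauchy-Binet formula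
(`cauchyBinet_sum_maps`) and the computation of the minors of the incidence matrix (`minor_sq`).

As `|E| - |V| = g - 1` for a connected graph, these combine to
`(1 + s) ζ(s)⁻¹ = (1 - s²)^g p(s)` with `p` differentiable and `p(1) = -2 (g - 1) |Jac(X)|`
(`zetaInv_factor`), and the expansion follows. -/

set_option autoImplicit false
set_option maxHeartbeats 1000000

/-- A graph in the sense of Serre: a finite set of vertices, a finite set of
half-edges with a fixed-point-free involution, and a root map. -/
structure SerreGraph where
  V : Type
  H : Type
  fintypeV : Fintype V
  fintypeH : Fintype H
  decEqV : DecidableEq V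
  decEqH : DecidableEq H
  inv : H → H
  inv_inv : ∀ h, inv (inv h) = h
  inv_ne : ∀ h, inv h ≠ h
  root : H → V

attribute [instance] SerreGraph.fintypeV SerreGraph.fintypeH SerreGraph.decEqV SerreGraph.decEqH

namespace SerreGraph

/-- Edges are orbits `{h, inv h}` of the involution. -/
def Edge (X : SerreGraph) : Type := Quot (fun h h' : X.H => h' = X.inv h)

/-- The edge underlying a half-edge. -/
def edgeOf (X : SerreGraph) (h : X.H) : X.Edge := Quot.mk _ h

lemma edgeOf_surjective (X : SerreGraph) : Function.Surjective X.edgeOf :=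
  fun e => Quot.exists_rep e

lemma edgeOf_inv (X : SerreGraph) (h : X.H) : X.edgeOf (X.inv h) = X.edgeOf h :=
  Quot.sound (X.inv_inv h).symm

instance (X : SerreGraph) : Finite X.Edge := Quot.finite _
noncomputable instance (X : SerreGraph) : Fintype X.Edge := Fintype.ofFinite _
noncomputable instance (X : SerreGraph) : DecidableEq X.Edge := Classical.decEq _

/-- One step of adjacency in the graph obtained by deleting the edges in `F`. -/
def adjStep (X : SerreGraph) (F : Finset X.Edge) (u v : X.V) : Prop :=
  ∃ h : X.H, X.root h = u ∧ X.root (X.inv h) = v ∧ X.edgeOf h ∉ F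

/-- `u` and `v` lie in the same connected component of `X ∖ F`. -/
def compRel (X : SerreGraph) (F : Finset X.Edge) (u v : X.V) : Prop :=
  Relation.ReflTransGen (X.adjStep F) u v

/-- A graph is connected if it is nonempty and any two vertices are joined by a path. -/
def Connected (X : SerreGraph) : Prop :=
  Nonempty X.V ∧ ∀ u v : X.V, X.compRel ∅ u v

/-- The vertex set of the connected component of `v` in `X ∖ F`. -/
noncomputable def compVerts (X : SerreGraph) (F : Finset X.Edge) (v : X.V) : Finset X.V :=
  (Set.toFinite {u | X.compRel F v u}).toFinset

/-- The set of connected components (as vertex sets) of `X ∖ F`. -/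
noncomputable def components (X : SerreGraph) (F : Finset X.Edge) : Finset (Finset X.V) :=
  Finset.univ.image (X.compVerts F)

/-- The edges of `X ∖ F` belonging to a component with vertex set `C`. -/
noncomputable def edgesIn (X : SerreGraph) (F : Finset X.Edge) (C : Finset X.V) :
    Finset X.Edge :=
  (Set.toFinite {e | e ∉ F ∧ ∃ h, X.edgeOf h = e ∧ X.root h ∈ C}).toFinset

/-- A spanning tree: a spanning-connected set of edges of cardinality `|V| - 1`. -/
def IsSpanningTree (X : SerreGraph) (T : Finset X.Edge) : Prop :=
  (∀ u v : X.V, Relation.ReflTransGen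
      (fun a b => ∃ h, X.root h = a ∧ X.root (X.inv h) = b ∧ X.edgeOf h ∈ T) u v) ∧
  T.card + 1 = Fintype.card X.V

noncomputable def spanningTrees (X : SerreGraph) : Finset (Finset X.Edge) :=
  (Set.toFinite {T | X.IsSpanningTree T}).toFinset

/-- The number of spanning trees of `X`; by Kirchhoff's theorem this is `|Jac(X)|`. -/
noncomputable def numSpanningTrees (X : SerreGraph) : ℕ := X.spanningTrees.card

/-- The genus `g(X) = |E(X)| - |V(X)| + 1` of a (connected) graph. -/
noncomputable def genus (X : SerreGraph) : ℕ :=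
  Fintype.card X.Edge + 1 - Fintype.card X.V

/-- The Jacobian polynomial `J_X = ∑_T ∏_{e ∉ T} x_e`, summed over spanning trees. -/
noncomputable def jacobianPoly (X : SerreGraph) (R : Type) [CommRing R] :
    MvPolynomial X.Edge R :=
  ∑ T ∈ X.spanningTrees, ∏ e ∈ Tᶜ, MvPolynomial.X e

/-- A closed path: a nonempty list of half-edges, consecutively matched head-to-tail,
including from the last one back to the first. -/
def IsClosedPath (X : SerreGraph) (l : List X.H) : Prop :=
  l ≠ [] ∧ List.Chain' (fun a b => X.root (X.inv a) = X.root b) (l ++ l.take 1)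

/-- A cycle with pairwise distinct edges, all belonging to `S`. -/
def IsEdgeCycle (X : SerreGraph) (S : Finset X.Edge) (l : List X.H) : Prop :=
  X.IsClosedPath l ∧ (∀ h ∈ l, X.edgeOf h ∈ S) ∧ (l.map X.edgeOf).Nodup

/-- An edge is a loop if its two root vertices coincide. -/
def IsLoop (X : SerreGraph) (e : X.Edge) : Prop :=
  ∃ h, X.edgeOf h = e ∧ X.root h = X.root (X.inv h)

/-- An orientation: a choice of half-edge (source half) for every edge. -/
structure Orientation (X : SerreGraph) where
  pick : X.Edge → X.H
  pick_spec : ∀ e, X.edgeOf (pick e) = e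

/-- The voltage of a half-edge: `η(e)` if it is traversed in the chosen orientation,
`η(e)⁻¹` otherwise. -/
def halfVoltage {G : Type} [Group G] (X : SerreGraph) (o : X.Orientation)
    (η : X.Edge → G) (h : X.H) : G :=
  if h = o.pick (X.edgeOf h) then η (X.edgeOf h) else (η (X.edgeOf h))⁻¹

/-- The (Frobenius) voltage of a path of half-edges. -/
def pathVoltage {G : Type} [Group G] (X : SerreGraph) (o : X.Orientation)
    (η : X.Edge → G) (l : List X.H) : G :=
  (l.map (X.halfVoltage o η)).prod

/-- A morphism of Serre graphs. -/
structure Hom (X Y : SerreGraph) where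
  vMap : X.V → Y.V
  hMap : X.H → Y.H
  hMap_inv : ∀ h, hMap (X.inv h) = Y.inv (hMap h)
  root_hMap : ∀ h, Y.root (hMap h) = vMap (X.root h)

/-- The induced map on edges. -/
def Hom.edgeMap {X Y : SerreGraph} (f : Hom X Y) : X.Edge → Y.Edge :=
  Quot.map f.hMap (fun a b hab => by rw [hab, f.hMap_inv])

/-- A morphism is harmonic with local degree function `d` if for every vertex `v`
upstairs and every half-edge `h` rooted at its image, `d v` is the number of
half-edges at `v` mapping to `h`. -/
structure IsHarmonic {X Y : SerreGraph} (f : Hom X Y) (d : X.V → ℕ) : Prop where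
  pos : ∀ v, 0 < d v
  balanced : ∀ (v : X.V) (h : Y.H), Y.root h = f.vMap v →
    d v = Nat.card {h' : X.H // X.root h' = v ∧ f.hMap h' = h}

/-- A harmonic Galois cover with Galois group `G`: a harmonic morphism of degree `|G|`
together with an equivariant `G`-action that is transitive on vertex fibers and simply
transitive on edge fibers. -/
structure GCover (G : Type) [Group G] [Fintype G] (Xt X : SerreGraph)
    extends Hom Xt X where
  d : Xt.V → ℕ
  harm : IsHarmonic toHom d
  deg_eq : ∀ v : X.V,
    ∑ w ∈ Finset.univ.filter (fun w => toHom.vMap w = v), d w = Fintype.card G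
  smulV : G → Xt.V → Xt.V
  smulH : G → Xt.H → Xt.H
  one_smulV : ∀ w, smulV 1 w = w
  mul_smulV : ∀ g g' w, smulV (g * g') w = smulV g (smulV g' w)
  one_smulH : ∀ h, smulH 1 h = h
  mul_smulH : ∀ g g' h, smulH (g * g') h = smulH g (smulH g' h)
  smulH_inv : ∀ g h, smulH g (Xt.inv h) = Xt.inv (smulH g h)
  root_smulH : ∀ g h, Xt.root (smulH g h) = smulV g (Xt.root h)
  vMap_smulV : ∀ g w, toHom.vMap (smulV g w) = toHom.vMap w
  hMap_smulH : ∀ g h, toHom.hMap (smulH g h) = toHom.hMap h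
  d_smulV : ∀ g w, d (smulV g w) = d w
  vertex_trans : ∀ w w' : Xt.V, toHom.vMap w = toHom.vMap w' → ∃ g, smulV g w = w'
  edge_trans : ∀ ht ht' : Xt.H,
    (toHom.hMap ht' = toHom.hMap ht ∨ toHom.hMap ht' = X.inv (toHom.hMap ht)) →
    ∃ g, smulH g ht = ht' ∨ smulH g ht = Xt.inv ht'
  edge_free : ∀ (g : G) (ht : Xt.H),
    (smulH g ht = ht ∨ smulH g ht = Xt.inv ht) → g = 1

namespace GCover

variable {G : Type} [Group G] [Fintype G] {Xt X : SerreGraph}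

/-- The cover is free if all local degrees are one. -/
def IsFree (c : GCover G Xt X) : Prop := ∀ w, c.d w = 1

/-- The dilation subgroup of a vertex: the common stabilizer of the vertices in its fiber. -/
def dilation (c : GCover G Xt X) (v : X.V) : Set G :=
  {g | ∀ w : Xt.V, c.vMap w = v → c.smulV g w = w}

/-- One step of adjacency upstairs, through half-edges lying over `X ∖ F`. -/
def liftStep (c : GCover G Xt X) (F : Finset X.Edge) (a b : Xt.V) : Prop :=
  ∃ ht : Xt.H, Xt.root ht = a ∧ Xt.root (Xt.inv ht) = b ∧ X.edgeOf (c.hMap ht) ∉ F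

/-- The number of connected components of the preimage of the component of `v` in `X ∖ F`. -/
noncomputable def numLiftComponents (c : GCover G Xt X) (F : Finset X.Edge) (v : X.V) : ℕ :=
  Nat.card (Quot (fun a b : {w : Xt.V // X.compRel F v (c.vMap w)} => c.liftStep F a.1 b.1))

/-- The connected component of `v` in `X ∖ F` is `G`-nontrivial, i.e. the restriction of the
cover over it is not isomorphic to the trivial `G`-cover (equivalently, its preimage does
not have exactly `|G|` connected components). -/
def GNontrivialAt (c : GCover G Xt X) (F : Finset X.Edge) (v : X.V) : Prop :=
  c.numLiftComponents F v ≠ Fintype.card G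

/-- Independent sets of the matroid `M*(X̃/X)`. -/
def Indep (c : GCover G Xt X) (F : Finset X.Edge) : Prop :=
  ∀ v : X.V, c.GNontrivialAt F v

/-- Bases of the matroid `M*(X̃/X)`: maximal independent sets. -/
def IsBasisD (c : GCover G Xt X) (F : Finset X.Edge) : Prop :=
  c.Indep F ∧ ∀ F' : Finset X.Edge, F ⊆ F' → c.Indep F' → F' = F

/-- The dilated `G`-voltage assignment `η` (together with a section `σ` of the vertex map)
represents the cover: for each edge `e`, some lift of `e` runs from `σ(s(e))` to
`η(e) • σ(t(e))`. -/
structure IsVoltageRep (c : GCover G Xt X) (o : X.Orientation) (σ : X.V → Xt.V)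
    (η : X.Edge → G) : Prop where
  sec : ∀ v, c.vMap (σ v) = v
  lift : ∀ e : X.Edge, ∃ ht : Xt.H, c.hMap ht = o.pick e ∧
    Xt.root ht = σ (X.root (o.pick e)) ∧
    Xt.root (Xt.inv ht) = c.smulV (η e) (σ (X.root (X.inv (o.pick e))))

/-- The component of `v` in `X ∖ F` is nontrivial for the cover twisted by the character
`ρ`: it contains a vertex whose dilation group has nontrivial image under `ρ`, or a closed
path whose voltage has nontrivial image under `ρ`. -/
def RhoNontrivialAt (c : GCover G Xt X) (o : X.Orientation) (η : X.Edge → G)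
    (ρ : G →* ℂ) (F : Finset X.Edge) (v : X.V) : Prop :=
  (∃ u : X.V, X.compRel F v u ∧ ∃ g ∈ c.dilation u, ρ g ≠ 1) ∨
  (∃ l : List X.H, X.IsClosedPath l ∧
    (∀ h ∈ l, X.edgeOf h ∉ F ∧ X.compRel F v (X.root h)) ∧
    ρ (X.pathVoltage o η l) ≠ 1)

/-- Bases of the `ρ`-twisted matroid `M*(X̃/X, ρ)`: maximal subsets `F` such that every
connected component of `X ∖ F` is `ρ`-nontrivial. -/
def IsBasisRho (c : GCover G Xt X) (o : X.Orientation) (η : X.Edge → G)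
    (ρ : G →* ℂ) (F : Finset X.Edge) : Prop :=
  (∀ v : X.V, c.RhoNontrivialAt o η ρ F v) ∧
  ∀ F' : Finset X.Edge, F ⊆ F' → (∀ v : X.V, c.RhoNontrivialAt o η ρ F' v) → F' = F

end GCover

/-- The weight of a connected component with edge set `S`: `|1 - ρ(η(C))|²` where `η(C)` is
the voltage of its unique cycle, if it has one, and `1` otherwise (tree components). -/
noncomputable def cycleWeight {G : Type} [Group G] (X : SerreGraph) (o : X.Orientation)
    (η : X.Edge → G) (ρ : G →* ℂ) (S : Finset X.Edge) : ℝ := by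
  classical exact
  if hc : ∃ l, X.IsEdgeCycle S l then
    ‖(1 : ℂ) - ρ (X.pathVoltage o η hc.choose)‖ ^ 2
  else 1

/-- The weight `w_ρ(F)`: the product of the weights of the connected components of `X ∖ F`. -/
noncomputable def basisWeight {G : Type} [Group G] (X : SerreGraph) (o : X.Orientation)
    (η : X.Edge → G) (ρ : G →* ℂ) (F : Finset X.Edge) : ℝ :=
  ∏ C ∈ X.components F, cycleWeight X o η ρ (X.edgesIn F C)

/-- The weight `w(M*(X̃/X, ρ))` of the `ρ`-twisted matroid: the sum of the weights of its
bases. -/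
noncomputable def GCover.twistedWeight {G : Type} [Group G] [Fintype G] {Xt X : SerreGraph}
    (c : GCover G Xt X) (o : X.Orientation) (η : X.Edge → G) (ρ : G →* ℂ) : ℝ :=
  ∑ F ∈ (Set.toFinite {F : Finset X.Edge | c.IsBasisRho o η ρ F}).toFinset,
    basisWeight X o η ρ F

/-- The weight polynomial `P_{X̃/X,ρ} = ∑_F w_ρ(F) ∏_{e ∈ F} x_e` of the `ρ`-twisted
matroid, summed over its bases. -/
noncomputable def GCover.twistedWeightPoly {G : Type} [Group G] [Fintype G]
    {Xt X : SerreGraph} (c : GCover G Xt X) (o : X.Orientation) (η : X.Edge → G)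
    (ρ : G →* ℂ) : MvPolynomial X.Edge ℝ :=
  ∑ F ∈ (Set.toFinite {F : Finset X.Edge | c.IsBasisRho o η ρ F}).toFinset,
    MvPolynomial.C (basisWeight X o η ρ F) * ∏ e ∈ F, MvPolynomial.X e

end SerreGraph
namespace SerreGraph

/-- One contraction step: `a` and `b` are joined by an edge belonging to `F`. -/
def contractStep (X : SerreGraph) (F : Finset X.Edge) (a b : X.V) : Prop :=
  ∃ h, X.edgeOf h ∈ F ∧ X.root h = a ∧ X.root (X.inv h) = b

/-- Data exhibiting `Xc` as the contraction of `X` along the edge set `F`: the vertices of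
`Xc` are the connected components of the subgraph spanned by `F`, and the half-edges of `Xc`
are the half-edges of `X` not lying on `F`. -/
structure ContractionData (X Xc : SerreGraph) (F : Finset X.Edge) where
  vMap : X.V → Xc.V
  hMap : (h : X.H) → X.edgeOf h ∉ F → Xc.H
  hMap_injective : ∀ h₁ hh₁ h₂ hh₂, hMap h₁ hh₁ = hMap h₂ hh₂ → h₁ = h₂
  hMap_surjective : ∀ k : Xc.H, ∃ h hh, hMap h hh = k
  hMap_inv : ∀ h hh hh', hMap (X.inv h) hh' = Xc.inv (hMap h hh)
  root_hMap : ∀ h hh, Xc.root (hMap h hh) = vMap (X.root h)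
  vMap_surjective : Function.Surjective vMap
  vMap_eq_iff : ∀ u v, vMap u = vMap v ↔ Relation.ReflTransGen (X.contractStep F) u v

/-- The valency of a vertex (loops counted twice). -/
noncomputable def valency (X : SerreGraph) (v : X.V) : ℕ :=
  Nat.card {h : X.H // X.root h = v}

/-- The Laplacian matrix `L = Q - A` of a graph. -/
noncomputable def lapl (X : SerreGraph) : Matrix X.V X.V ℤ :=
  Matrix.of fun u v =>
    (if u = v then (X.valency u : ℤ) else 0) -
      (Nat.card {h : X.H // X.root h = u ∧ X.root (X.inv h) = v} : ℤ)

/-- The Laplacian as a homomorphism on divisors. -/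
noncomputable def laplHom (X : SerreGraph) : (X.V → ℤ) →+ (X.V → ℤ) where
  toFun := fun D u => ∑ v, X.lapl u v * D v
  map_zero' := by funext u; simp
  map_add' := by
    intro a b; funext u
    simp [mul_add, Finset.sum_add_distrib]

/-- Divisors of total degree zero. -/
noncomputable def div0 (X : SerreGraph) : AddSubgroup (X.V → ℤ) where
  carrier := {D | ∑ v, D v = 0}
  add_mem' := by
    intro a b ha hb
    simp only [Set.mem_setOf_eq, Pi.add_apply] at *
    simp [Finset.sum_add_distrib, ha, hb]
  zero_mem' := by simp
  neg_mem' := by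
    intro a ha
    simp only [Set.mem_setOf_eq, Pi.neg_apply] at *
    simp [ha]

/-- The subgroup of principal divisors: the image of the Laplacian. -/
noncomputable def principal (X : SerreGraph) : AddSubgroup (X.V → ℤ) :=
  (laplHom X).range

/-- The Jacobian (critical) group `Jac(X) = Div₀(X) / Im L`. -/
noncomputable def jac (X : SerreGraph) : Type :=
  X.div0 ⧸ ((X.principal).addSubgroupOf X.div0)

noncomputable instance (X : SerreGraph) : AddCommGroup X.jac :=
  inferInstanceAs (AddCommGroup (X.div0 ⧸ ((X.principal).addSubgroupOf X.div0)))

/-- The pushforward of divisors along a graph morphism. -/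
noncomputable def pushforward {Xt X : SerreGraph} (f : Hom Xt X) (D : Xt.V → ℤ) :
    X.V → ℤ :=
  fun v => ∑ w ∈ Finset.univ.filter (fun w => f.vMap w = v), D w

/-- The diagonal valency matrix `Q` (over `ℂ`). -/
noncomputable def qMatrix (X : SerreGraph) : Matrix X.V X.V ℂ :=
  Matrix.of fun u v => if u = v then (X.valency u : ℂ) else 0

/-- The `ρ`-twisted adjacency matrix `A_ρ`. -/
noncomputable def twistedAdj {G : Type} [Group G] (X : SerreGraph) (o : X.Orientation)
    (η : X.Edge → G) (ρ : G →* ℂ) : Matrix X.V X.V ℂ :=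
  Matrix.of fun u v =>
    (∑ e ∈ Finset.univ.filter
        (fun e => X.root (o.pick e) = u ∧ X.root (X.inv (o.pick e)) = v), ρ (η e)) +
    (∑ e ∈ Finset.univ.filter
        (fun e => X.root (o.pick e) = v ∧ X.root (X.inv (o.pick e)) = u),
          (starRingEnd ℂ) (ρ (η e)))

/-- The `ρ`-twisted Laplacian `L_ρ = Q - A_ρ`. -/
noncomputable def twistedLapl {G : Type} [Group G] (X : SerreGraph) (o : X.Orientation)
    (η : X.Edge → G) (ρ : G →* ℂ) : Matrix X.V X.V ℂ :=
  X.qMatrix - X.twistedAdj o η ρ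

/-- The reciprocal `ζ_M(s, x_e, X)⁻¹ = det(I - W)` of the metric zeta function, where `W`
is the edge matrix with entries `s^{x_e}` (two-term determinant formula). -/
noncomputable def zetaMInv (X : SerreGraph) (x : X.Edge → ℝ) (s : ℝ) : ℝ :=
  Matrix.det ((1 : Matrix X.H X.H ℝ) - Matrix.of fun a b : X.H =>
    if X.root (X.inv a) = X.root b ∧ b ≠ X.inv a then s ^ (x (X.edgeOf a)) else 0)

/-- The reciprocal of the Ihara zeta function: the metric zeta with all lengths one. -/
noncomputable def zetaInv (X : SerreGraph) (s : ℝ) : ℝ :=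
  X.zetaMInv (fun _ => 1) s

/-- The reciprocal `L_M(s, x_e, X̃/X, ρ)⁻¹ = det(I - W_ρ)` of the metric Artin `L`-function
of the cover defined by the voltage assignment `η` (two-term determinant formula). -/
noncomputable def LMInv {G : Type} [Group G] (X : SerreGraph) (o : X.Orientation)
    (η : X.Edge → G) (ρ : G →* ℂ) (x : X.Edge → ℝ) (s : ℝ) : ℂ :=
  Matrix.det ((1 : Matrix X.H X.H ℂ) - Matrix.of fun a b : X.H =>
    if X.root (X.inv a) = X.root b ∧ b ≠ X.inv a then
      ρ (X.halfVoltage o η a) * ((s ^ (x (X.edgeOf a)) : ℝ) : ℂ)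
    else 0)

/-- The weight polynomial of a free cover defined by the voltage assignment `η`, twisted by
`ρ`: the sum over all `(g-1)`-element edge sets `F` all of whose complementary components
have genus one of `∏ᵢ |1 - ρ(η(Xᵢ))|² ∏_{e ∈ F} x_e`. -/
noncomputable def freeWeightPoly {G : Type} [Group G] (X : SerreGraph)
    (o : X.Orientation) (η : X.Edge → G) (ρ : G →* ℂ) : MvPolynomial X.Edge ℝ :=
  ∑ F ∈ (Set.toFinite {F : Finset X.Edge |
      F.card + Fintype.card X.V = Fintype.card X.Edge ∧
      ∀ C ∈ X.components F, (X.edgesIn F C).card = C.card}).toFinset,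
    MvPolynomial.C (basisWeight X o η ρ F) * ∏ e ∈ F, MvPolynomial.X e

/-- The `j`-th vertex on the chain subdividing the edge `e` into `n e` parts. -/
noncomputable def subVertex (X : SerreGraph) (o : X.Orientation) (n : X.Edge → ℕ)
    (e : X.Edge) (j : ℕ) : X.V ⊕ ((e : X.Edge) × Fin (n e - 1)) :=
  if _h0 : j = 0 then Sum.inl (X.root (o.pick e))
  else if h : j < n e then Sum.inr ⟨e, ⟨j - 1, by omega⟩⟩
  else Sum.inl (X.root (X.inv (o.pick e)))

/-- The graph obtained from `X` by replacing each edge `e` by a chain of `n e` edges. -/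
noncomputable def subdivide (X : SerreGraph) (o : X.Orientation) (n : X.Edge → ℕ) :
    SerreGraph where
  V := X.V ⊕ ((e : X.Edge) × Fin (n e - 1))
  H := (e : X.Edge) × (Fin (n e) × Bool)
  fintypeV := inferInstance
  fintypeH := inferInstance
  decEqV := Classical.decEq _
  decEqH := Classical.decEq _
  inv := fun p => ⟨p.1, (p.2.1, !p.2.2)⟩
  inv_inv := by rintro ⟨e, i, b⟩; simp
  inv_ne := by rintro ⟨e, i, b⟩ hcon; simp at hcon
  root := fun p => X.subVertex o n p.1 (if p.2.2 then (p.2.1 : ℕ) + 1 else (p.2.1 : ℕ))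

end SerreGraph

/-- The cycle graph with `k` vertices, every pair of cyclically adjacent vertices joined by
`M` parallel edges. -/
def cycleGraph (k M : ℕ) : SerreGraph where
  V := Fin k
  H := Fin k × Fin M × Bool
  fintypeV := inferInstance
  fintypeH := inferInstance
  decEqV := inferInstance
  decEqH := inferInstance
  inv := fun p => (p.1, p.2.1, !p.2.2)
  inv_inv := by rintro ⟨i, j, b⟩; simp
  inv_ne := by rintro ⟨i, j, b⟩ hcon; simp at hcon
  root := fun p => if p.2.2 then finRotate k p.1 else p.1

namespace SerreGraph

open Matrix

/-! ### Half-edges and edges -/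

lemma edgeOf_eq_iff (X : SerreGraph) (a b : X.H) :
    X.edgeOf a = X.edgeOf b ↔ a = b ∨ a = X.inv b := by
  constructor
  · intro h
    let φ : X.Edge → Set X.H := Quot.lift (fun h => {h, X.inv h}) (by
      rintro a b rfl
      simp [X.inv_inv, Set.pair_comm])
    have h1 : φ (X.edgeOf a) = φ (X.edgeOf b) := congrArg φ h
    have h2 : a ∈ φ (X.edgeOf a) := Set.mem_insert a _
    rw [h1] at h2
    exact h2
  · rintro (rfl | rfl)
    · rfl
    · exact X.edgeOf_inv b

/-- A chosen half-edge of the edge `e`; it orients `e`. -/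
noncomputable def half (X : SerreGraph) (e : X.Edge) : X.H := Quot.out e

@[simp] lemma edgeOf_half (X : SerreGraph) (e : X.Edge) : X.edgeOf (X.half e) = e :=
  Quot.out_eq e

/-- The half-edges are two copies of the edge set: the chosen half of each edge and its
opposite. -/
noncomputable def halfEquiv (X : SerreGraph) : X.Edge ⊕ X.Edge ≃ X.H :=
  Equiv.ofBijective (Sum.elim X.half (fun e => X.inv (X.half e))) (by
    have key : ∀ e e', X.half e = X.inv (X.half e') → False := by
      intro e e' h
      have h1 : e = e' := by simpa [edgeOf_inv] using congrArg X.edgeOf h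
      subst h1
      exact X.inv_ne _ h.symm
    have inj : ∀ e e', X.half e = X.half e' → e = e' := by
      intro e e' h
      simpa using congrArg X.edgeOf h
    constructor
    · rintro (e | e) (e' | e') h
      · exact congrArg _ (inj _ _ h)
      · exact (key _ _ h).elim
      · exact (key _ _ h.symm).elim
      · refine congrArg _ (inj _ _ ?_)
        have := congrArg X.inv h
        simpa [X.inv_inv] using this
    · intro h
      rcases (X.edgeOf_eq_iff h (X.half (X.edgeOf h))).1 (by simp) with h1 | h1
      · exact ⟨Sum.inl _, h1.symm⟩
      · exact ⟨Sum.inr _, h1.symm⟩)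

lemma sum_half (X : SerreGraph) {M : Type*} [AddCommMonoid M] (F : X.H → M) :
    ∑ h, F h = ∑ e, (F (X.half e) + F (X.inv (X.half e))) := by
  rw [← X.halfEquiv.sum_comp, Fintype.sum_sum_type, ← Finset.sum_add_distrib]
  rfl

lemma card_H (X : SerreGraph) : Fintype.card X.H = 2 * Fintype.card X.Edge := by
  rw [← Fintype.card_congr X.halfEquiv, Fintype.card_sum, two_mul]

/-! ### The three-term determinant formula -/

/-- The `V × H` matrix recording the starting vertex of each half-edge. -/
def startMat (X : SerreGraph) : Matrix X.V X.H ℝ :=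
  Matrix.of fun v h => if X.root h = v then 1 else 0

/-- The `V × H` matrix recording the end vertex of each half-edge. -/
def endMat (X : SerreGraph) : Matrix X.V X.H ℝ :=
  Matrix.of fun v h => if X.root (X.inv h) = v then 1 else 0

/-- The permutation matrix of the involution on half-edges. -/
def invMat (X : SerreGraph) : Matrix X.H X.H ℝ :=
  Matrix.of fun a b => if b = X.inv a then 1 else 0

/-- The adjacency matrix. -/
def adjMat (X : SerreGraph) : Matrix X.V X.V ℝ := X.startMat * X.endMatᵀ

/-- The diagonal matrix of valencies. -/
def degMat (X : SerreGraph) : Matrix X.V X.V ℝ := X.startMat * X.startMatᵀ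

/-- The matrix `I - sA + s²(Q - I)` of the three-term determinant formula. -/
def bassMat (X : SerreGraph) (s : ℝ) : Matrix X.V X.V ℝ :=
  (1 - s ^ 2) • (1 : Matrix X.V X.V ℝ) - s • X.adjMat + s ^ 2 • X.degMat

lemma invMat_mul_apply (X : SerreGraph) {n : Type*} (M : Matrix X.H n ℝ) (a : X.H) (b : n) :
    (X.invMat * M) a b = M (X.inv a) b := by
  simp [invMat, Matrix.mul_apply]

lemma invMat_mul_self (X : SerreGraph) : X.invMat * X.invMat = 1 := by
  ext a b
  rw [invMat_mul_apply, Matrix.one_apply]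
  simp [invMat, X.inv_inv, eq_comm]

lemma invMat_mul_endMat (X : SerreGraph) : X.invMat * X.endMatᵀ = X.startMatᵀ := by
  ext a v
  rw [invMat_mul_apply]
  simp [startMat, endMat, X.inv_inv]

/-- The edge matrix is `s (Tᵀ S - J)`, with `S`, `T` the start and end matrices and `J` the
permutation matrix of the involution. -/
lemma zetaInv_eq (X : SerreGraph) (s : ℝ) :
    X.zetaInv s = (1 + s • X.invMat - s • (X.endMatᵀ * X.startMat)).det := by
  unfold zetaInv zetaMInv
  congr 1
  ext a b
  have h : (X.endMatᵀ * X.startMat) a b = if X.root (X.inv a) = X.root b then 1 else 0 := by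
    simp [endMat, startMat, Matrix.mul_apply, eq_comm]
  simp only [Matrix.sub_apply, Matrix.add_apply, Matrix.smul_apply, Matrix.of_apply, h,
    Real.rpow_one, invMat, smul_eq_mul]
  by_cases h1 : b = X.inv a
  · subst h1
    simp
  · by_cases h2 : X.root (X.inv a) = X.root b <;> simp [h1, h2]

/-- In the basis of half-edges grouped as chosen halves and opposites, `I + sJ` is the block
matrix with diagonal blocks `I` and off-diagonal blocks `sI`. -/
lemma det_one_add_invMat (X : SerreGraph) (s : ℝ) :
    (1 + s • X.invMat).det = (1 - s ^ 2) ^ Fintype.card X.Edge := by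
  rw [← Matrix.det_submatrix_equiv_self X.halfEquiv]
  have : (1 + s • X.invMat).submatrix X.halfEquiv X.halfEquiv =
      Matrix.fromBlocks 1 (s • 1) (s • 1) (1 : Matrix X.Edge X.Edge ℝ) := by
    ext a b
    have h : ∀ a, X.inv (X.halfEquiv a) = X.halfEquiv a.swap := by
      rintro (a | a)
      · rfl
      · exact X.inv_inv _
    simp only [Matrix.submatrix_apply, Matrix.add_apply, Matrix.smul_apply, Matrix.one_apply,
      invMat, Matrix.of_apply, h, X.halfEquiv.injective.eq_iff]
    rcases a with a | a <;> rcases b with b | b <;> simp [Matrix.one_apply, eq_comm]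
  rw [this, Matrix.det_fromBlocks_one₁₁]
  have : (1 : Matrix X.Edge X.Edge ℝ) - (s • 1) * (s • 1) = (1 - s ^ 2) • 1 := by
    rw [sub_smul, Matrix.smul_mul, Matrix.one_mul, smul_smul, one_smul, sq]
  rw [this, Matrix.det_smul, Matrix.det_one, mul_one]

/-- Bass's formula, with the exponent `|E| - |V|` split between the two sides. -/
lemma bass (X : SerreGraph) (s : ℝ) (hs : 1 - s ^ 2 ≠ 0) :
    (1 - s ^ 2) ^ Fintype.card X.V * X.zetaInv s =
      (1 - s ^ 2) ^ Fintype.card X.Edge * (X.bassMat s).det := by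
  have h1 : (1 + s • X.invMat) * ((1 - s ^ 2)⁻¹ • (1 - s • X.invMat)) = 1 := by
    rw [Matrix.mul_smul, add_mul, mul_sub, mul_sub, Matrix.smul_mul, Matrix.smul_mul,
      Matrix.mul_smul, Matrix.mul_smul, X.invMat_mul_self]
    rw [Matrix.one_mul, Matrix.mul_one, Matrix.one_mul, smul_smul, ← sq]
    have : (1 - s • X.invMat + (s • X.invMat - s ^ 2 • (1 : Matrix X.H X.H ℝ))) =
        (1 - s ^ 2) • 1 := by
      rw [sub_smul, one_smul]; abel
    rw [this, smul_smul, inv_mul_cancel₀ hs, one_smul]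
  -- `I + sJ - s Tᵀ S = (I + sJ) (I - (s/(1-s²)) (I - sJ) Tᵀ S)`, and then the second factor
  -- is exchanged for a `V × V` determinant
  have h2 : 1 + s • X.invMat - s • (X.endMatᵀ * X.startMat) =
      (1 + s • X.invMat) *
        (1 - (((1 - s ^ 2)⁻¹ • (1 - s • X.invMat)) * (s • X.endMatᵀ)) * X.startMat) := by
    rw [mul_sub, mul_one, Matrix.mul_assoc, ← Matrix.mul_assoc (1 + s • X.invMat), h1,
      Matrix.one_mul, Matrix.smul_mul]
  have h3 : (1 - s ^ 2) • (1 - X.startMat *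
      (((1 - s ^ 2)⁻¹ • (1 - s • X.invMat)) * (s • X.endMatᵀ))) = X.bassMat s := by
    rw [Matrix.smul_mul, Matrix.mul_smul, smul_sub, smul_smul, mul_inv_cancel₀ hs, one_smul,
      Matrix.mul_smul, Matrix.mul_smul, Matrix.sub_mul, Matrix.smul_mul, invMat_mul_endMat,
      Matrix.mul_sub, Matrix.one_mul, Matrix.mul_smul, smul_sub, smul_smul, ← sq, bassMat, adjMat, degMat]
    abel
  rw [zetaInv_eq, h2, Matrix.det_mul, det_one_add_invMat, Matrix.det_one_sub_mul_comm, ← h3,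
    Matrix.det_smul]
  ring

end SerreGraph

/-! ### The Cauchy-Binet formula -/

/-- The Cauchy-Binet formula, summed over all maps `f` instead of all `n`-element subsets;
each subset is then counted `n!` times. -/
lemma cauchyBinet_sum_maps {n m : Type*} [Fintype n] [DecidableEq n] [Fintype m]
    [DecidableEq m] (A : Matrix n m ℤ) (B : Matrix m n ℤ) :
    ((Fintype.card n).factorial : ℤ) * (A * B).det =
      ∑ f : n → m, (A.submatrix id f).det * (B.submatrix f id).det := by
  have h1 : (A * B).det = ∑ f : n → m, (A.submatrix id f).det * ∏ i, B (f i) i := by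
    simp only [Matrix.det_apply', Matrix.mul_apply, Finset.prod_univ_sum, Finset.mul_sum,
      Fintype.piFinset_univ, Finset.sum_mul]
    rw [Finset.sum_comm]
    simp [Finset.prod_mul_distrib, mul_assoc]
  have h2 : ∀ τ : Equiv.Perm n, (A * B).det =
      ∑ f : n → m, (A.submatrix id f).det *
        ((Equiv.Perm.sign τ : ℤ) * ∏ i, (B.submatrix f id) (τ i) i) := by
    intro τ
    rw [h1, ← (Equiv.arrowCongr τ (Equiv.refl m)).symm.sum_comp]
    refine Finset.sum_congr rfl fun f _ => ?_
    have : (A.submatrix id ((Equiv.arrowCongr τ (Equiv.refl m)).symm f)).det =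
        (Equiv.Perm.sign τ : ℤ) * (A.submatrix id f).det := by
      have := Matrix.det_permute' τ (A.submatrix id f)
      exact this
    rw [this]
    simp only [Equiv.arrowCongr_symm, Equiv.arrowCongr_apply, Equiv.symm_symm, Equiv.refl_symm,
      Equiv.coe_refl, Function.comp_apply, id, Matrix.submatrix_apply]
    ring
  have h3 : ((Fintype.card n).factorial : ℤ) * (A * B).det =
      ∑ _τ : Equiv.Perm n, (A * B).det := by
    simp [Fintype.card_perm]
  rw [h3, Finset.sum_congr rfl fun τ _ => h2 τ, Finset.sum_comm]
  refine Finset.sum_congr rfl fun f _ => ?_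
  rw [Matrix.det_apply' (B.submatrix f id), Finset.mul_sum]
  rfl

lemma card_maps_with_image {n m : Type*} [Fintype n] [DecidableEq n] [Fintype m]
    [DecidableEq m] (T : Finset m) (hT : T.card = Fintype.card n) :
    (Finset.univ.filter fun f : n → m => Finset.univ.image f = T).card =
      (Fintype.card n).factorial := by
  have e : n ≃ T := Fintype.equivOfCardEq (by simp [hT])
  rw [← Fintype.card_equiv e, ← Finset.card_univ]
  symm
  refine Finset.card_bij (fun e _ i => (e i : m)) ?_ ?_ ?_
  · intro e _
    simp only [Finset.mem_filter, Finset.mem_univ, true_and]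
    ext x
    simp only [Finset.mem_image, Finset.mem_univ, true_and]
    exact ⟨by rintro ⟨i, rfl⟩; exact (e i).2, fun hx => ⟨e.symm ⟨x, hx⟩, by simp⟩⟩
  · intro e _ e' _ h
    ext i
    exact congrFun h i
  · intro f hf
    have hf : Finset.univ.image f = T := by simpa using hf
    let g : n → T := fun i => ⟨f i, hf ▸ Finset.mem_image_of_mem f (Finset.mem_univ i)⟩
    have hg : Function.Surjective g := by
      rintro ⟨x, hx⟩
      rw [← hf] at hx
      obtain ⟨i, -, hi⟩ := Finset.mem_image.1 hx
      exact ⟨i, Subtype.ext hi⟩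
    have hb : Function.Bijective g :=
      (Fintype.bijective_iff_surjective_and_card g).2 ⟨hg, by simp [hT]⟩
    exact ⟨Equiv.ofBijective g hb, Finset.mem_univ _, rfl⟩

namespace SerreGraph

open Matrix

/-! ### The matrix-tree theorem -/

/-- The signed incidence matrix, each edge being oriented by its chosen half. -/
noncomputable def incid (X : SerreGraph) : Matrix X.V X.Edge ℤ :=
  Matrix.of fun v e => (if v = X.root (X.half e) then 1 else 0) -
    (if v = X.root (X.inv (X.half e)) then 1 else 0)

/-- The incidence matrix with the row of the vertex `r` deleted. -/
noncomputable def redIncid (X : SerreGraph) (r : X.V) : Matrix {v // v ≠ r} X.Edge ℤ :=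
  X.incid.submatrix Subtype.val id

/-- One step of adjacency through the edges in `T`. -/
def stepIn (X : SerreGraph) (T : Set X.Edge) (a b : X.V) : Prop :=
  ∃ h, X.root h = a ∧ X.root (X.inv h) = b ∧ X.edgeOf h ∈ T

lemma stepIn_symm (X : SerreGraph) (T : Set X.Edge) {a b : X.V} :
    X.stepIn T a b → X.stepIn T b a := by
  rintro ⟨h, h1, h2, h3⟩
  exact ⟨X.inv h, h2, by rw [X.inv_inv, h1], by rwa [X.edgeOf_inv]⟩

/-- The boundary of a path in the edges `f i` from `u` to `v` is `u - v`. -/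
lemma exists_chain (X : SerreGraph) {ι : Type} [Fintype ι] [DecidableEq ι] (f : ι → X.Edge)
    {u v : X.V} (h : Relation.ReflTransGen (X.stepIn (Set.range f)) u v) :
    ∃ c : ι → ℤ, ∀ w, ∑ i, X.incid w (f i) * c i =
      (if w = u then 1 else 0) - (if w = v then 1 else 0) := by
  induction h with
  | refl => exact ⟨0, by simp⟩
  | tail _ hst ih =>
    obtain ⟨c, hc⟩ := ih
    obtain ⟨h, rfl, rfl, ⟨i, hi⟩⟩ := hst
    have key : ∃ ε : ℤ, ∀ w, X.incid w (f i) * ε =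
        (if w = X.root h then 1 else 0) - (if w = X.root (X.inv h) then 1 else 0) := by
      rcases (X.edgeOf_eq_iff h (X.half (f i))).1 (by simp [hi]) with h1 | h1
      · exact ⟨1, fun w => by simp [incid, h1]⟩
      · exact ⟨-1, fun w => by simp [incid, h1, X.inv_inv]⟩
    obtain ⟨ε, hε⟩ := key
    refine ⟨c + Pi.single i ε, fun w => ?_⟩
    simp only [Pi.add_apply, mul_add, Finset.sum_add_distrib, hc]
    rw [Finset.sum_eq_single i (fun j _ hj => by simp [hj]) (by simp)]
    rw [Pi.single_eq_same, hε]
    ring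

/-- If the edges `f i` join every vertex to `r`, the columns `f i` of the reduced incidence matrix
span the integer lattice. -/
lemma exists_right_inverse (X : SerreGraph) (r : X.V) {ι : Type} [Fintype ι] [DecidableEq ι]
    (f : ι → X.Edge)
    (h : ∀ u, Relation.ReflTransGen (X.stepIn (Set.range f)) u r) :
    ∃ C : Matrix ι {v // v ≠ r} ℤ, (X.redIncid r).submatrix id f * C = 1 := by
  choose c hc using fun u => X.exists_chain f (h u)
  refine ⟨Matrix.of fun i u => c u i, ?_⟩
  ext w u
  have := hc u w
  simp only [Matrix.mul_apply, redIncid, Matrix.submatrix_apply, id, Matrix.of_apply, this,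
    Matrix.one_apply, Subtype.ext_iff, if_neg w.2, sub_zero]

lemma card_ne_add_one (X : SerreGraph) (r : X.V) :
    Fintype.card {v // v ≠ r} + 1 = Fintype.card X.V := by
  have := Fintype.card_subtype_compl (fun v => v = r)
  have h2 : 0 < Fintype.card X.V := Fintype.card_pos_iff.2 ⟨r⟩
  simp only [Fintype.card_subtype_eq] at this
  simp only [ne_eq, this]
  omega

/-- The maximal minors of the reduced incidence matrix are `±1` at spanning trees and vanish
elsewhere: a path to `r` from every vertex makes the minor invertible over `ℤ`, whereas the
indicator of the vertices not joined to `r` is a left kernel vector. -/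
lemma minor_sq (X : SerreGraph) (r : X.V) (f : {v // v ≠ r} → X.Edge) :
    ((X.redIncid r).submatrix id f).det * ((X.redIncid r).submatrix id f).det =
      if Finset.univ.image f ∈ X.spanningTrees then 1 else 0 := by
  classical
  have hcard := X.card_ne_add_one r
  have hmem : Finset.univ.image f ∈ X.spanningTrees ↔
      (∀ u v, Relation.ReflTransGen (X.stepIn (Set.range f)) u v) ∧
        (Finset.univ.image f).card + 1 = Fintype.card X.V := by
    have hs : ∀ e, e ∈ Finset.univ.image f ↔ e ∈ Set.range f := by simp
    rw [spanningTrees, Set.Finite.mem_toFinset]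
    change X.IsSpanningTree _ ↔ _
    simp only [IsSpanningTree, hs]
    rfl
  simp only [hmem]
  by_cases hconn : ∀ u, Relation.ReflTransGen (X.stepIn (Set.range f)) u r
  · by_cases hinj : Function.Injective f
    · obtain ⟨C, hC⟩ := X.exists_right_inverse r f hconn
      rw [if_pos]
      · exact Int.isUnit_mul_self (Matrix.isUnit_det_of_right_inverse hC)
      · refine ⟨fun u v => (hconn u).trans ?_, ?_⟩
        · have reach_symm : ∀ {u v}, Relation.ReflTransGen (X.stepIn (Set.range f)) u v →
              Relation.ReflTransGen (X.stepIn (Set.range f)) v u := by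
            intro u v h
            induction h with
            | refl => exact .refl
            | tail _ h ih => exact ih.head (X.stepIn_symm _ h)
          exact reach_symm (hconn v)
        · rw [Finset.card_image_of_injective _ hinj, Finset.card_univ, hcard]
    · rw [if_neg]
      · obtain ⟨i, j, hij, hne⟩ : ∃ i j, f i = f j ∧ i ≠ j := by
          simpa [Function.Injective] using hinj
        rw [Matrix.det_zero_of_column_eq hne (fun k => by simp [hij]), mul_zero]
      · rintro ⟨-, h⟩
        refine hinj (Set.injOn_univ.1 ?_)
        rw [← Finset.coe_univ]
        refine Finset.card_image_iff.1 ?_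
        rw [Finset.card_univ]
        omega
  · rw [if_neg (fun h => hconn fun u => h.1 u r)]
    push Not at hconn
    obtain ⟨v0, hv0⟩ := hconn
    have : ((X.redIncid r).submatrix id f).det = 0 := by
      rw [← Matrix.exists_vecMul_eq_zero_iff]
      let x : X.V → ℤ := fun v =>
        if Relation.ReflTransGen (X.stepIn (Set.range f)) v r then 0 else 1
      have hxr : x r = 0 := if_pos Relation.ReflTransGen.refl
      have hx : ∀ i, x (X.root (X.half (f i))) = x (X.root (X.inv (X.half (f i)))) := by
        intro i
        have hs : X.stepIn (Set.range f) (X.root (X.half (f i)))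
            (X.root (X.inv (X.half (f i)))) := ⟨_, rfl, rfl, by simp⟩
        have : Relation.ReflTransGen (X.stepIn (Set.range f)) (X.root (X.half (f i))) r ↔
            Relation.ReflTransGen (X.stepIn (Set.range f)) (X.root (X.inv (X.half (f i)))) r :=
          ⟨fun h => h.head (X.stepIn_symm _ hs), fun h => h.head hs⟩
        simp only [x, this]
      refine ⟨fun v => x v, fun h => ?_, ?_⟩
      · have hne : v0 ≠ r := fun h => hv0 (by rw [h])
        have := congrFun h ⟨v0, hne⟩
        simp [x, hv0] at this
      · ext i
        have h1 : ∑ v, x v * X.incid v (f i) = 0 := by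
          simp [incid, mul_sub, Finset.sum_sub_distrib, hx i]
        rw [Fintype.sum_eq_add_sum_subtype_ne _ r, hxr, zero_mul, zero_add] at h1
        simpa [Matrix.vecMul, dotProduct, redIncid] using h1
    rw [this, mul_zero]

lemma det_redIncid (X : SerreGraph) (r : X.V) :
    (X.redIncid r * (X.redIncid r)ᵀ).det = X.numSpanningTrees := by
  have hcard := X.card_ne_add_one r
  have h := cauchyBinet_sum_maps (X.redIncid r) (X.redIncid r)ᵀ
  have h1 : ∀ f : {v // v ≠ r} → X.Edge,
      ((X.redIncid r).submatrix id f).det * ((X.redIncid r)ᵀ.submatrix f id).det =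
      ∑ T ∈ X.spanningTrees, if Finset.univ.image f = T then 1 else 0 := by
    intro f
    rw [← Matrix.transpose_submatrix, Matrix.det_transpose, minor_sq]
    simp
  rw [Finset.sum_congr rfl fun f _ => h1 f, Finset.sum_comm] at h
  have h2 : ∀ T ∈ X.spanningTrees, (∑ f : {v // v ≠ r} → X.Edge,
      if Finset.univ.image f = T then (1 : ℤ) else 0) =
        (Fintype.card {v // v ≠ r}).factorial := by
    intro T hT
    have hT : X.IsSpanningTree T := by simpa [spanningTrees] using hT
    rw [Finset.sum_boole, card_maps_with_image]
    have := hT.2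
    omega
  rw [Finset.sum_congr rfl h2, Finset.sum_const, nsmul_eq_mul, mul_comm] at h
  exact mul_right_cancel₀ (by positivity) h

/-- The Laplacian factors as `Q - A = B Bᵀ`; the orientation used for `B` does not matter. -/
lemma incid_mul_transpose (X : SerreGraph) :
    (X.incid * X.incidᵀ).map (Int.cast : ℤ → ℝ) = X.degMat - X.adjMat := by
  ext u v
  simp only [Matrix.map_apply, Matrix.mul_apply, Matrix.sub_apply, degMat, adjMat,
    Matrix.transpose_apply, Int.cast_sum, Int.cast_mul]
  rw [← Finset.sum_sub_distrib, X.sum_half]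
  refine Finset.sum_congr rfl fun e _ => ?_
  simp only [incid, startMat, endMat, Matrix.of_apply, X.inv_inv, Int.cast_sub, Int.cast_ite,
    Int.cast_one, Int.cast_zero, eq_comm (a := u), eq_comm (a := v)]
  ring

/-- The matrix-tree theorem, for the real Laplacian `Q - A`. -/
lemma matrixTree (X : SerreGraph) (r : X.V) :
    (Matrix.toSquareBlockProp (X.degMat - X.adjMat) fun v => v ≠ r).det =
      X.numSpanningTrees := by
  have h : Matrix.toSquareBlockProp (X.degMat - X.adjMat) (fun v => v ≠ r) =
      (X.redIncid r * (X.redIncid r)ᵀ).map (Int.castRingHom ℝ) := by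
    rw [← incid_mul_transpose]
    rfl
  rw [h, ← RingHom.mapMatrix_apply, ← RingHom.map_det, det_redIncid]
  simp

/-- Connectedness makes the reduced incidence matrix surjective, so `|V| - 1 ≤ |E|`; hence the
truncated subtraction in the genus is a true one. -/
lemma card_edge_add_one (X : SerreGraph) (hX : X.Connected) :
    Fintype.card X.Edge + 1 = Fintype.card X.V + X.genus := by
  obtain ⟨⟨r⟩, hc⟩ := hX
  have hcard := X.card_ne_add_one r
  obtain ⟨C, hC⟩ := X.exists_right_inverse r id (fun u => by
    have h : Relation.ReflTransGen (X.adjStep ∅) u r := hc u r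
    refine Relation.ReflTransGen.mono ?_ _ _ h
    rintro a b ⟨h, h1, h2, -⟩
    exact ⟨h, h1, h2, by simp⟩)
  have h1 := Matrix.rank_mul_le_left ((X.redIncid r).submatrix id id) C
  rw [hC, Matrix.rank_one] at h1
  have h2 := h1.trans (Matrix.rank_le_card_width _)
  unfold genus
  omega

end SerreGraph

namespace SerreGraph

open Matrix

/-! ### The order of vanishing at `s = 1` -/

/-- The valency of `v`, as a real number. -/
noncomputable def deg (X : SerreGraph) (v : X.V) : ℝ :=
  ∑ h : X.H, if X.root h = v then 1 else 0

lemma sum_deg (X : SerreGraph) : ∑ v, X.deg v = 2 * Fintype.card X.Edge := by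
  unfold deg
  rw [Finset.sum_comm]
  simp [X.card_H]

lemma degMat_row_sum (X : SerreGraph) (i : X.V) : ∑ j, X.degMat i j = X.deg i := by
  simp only [degMat, Matrix.mul_apply, deg]
  rw [Finset.sum_comm]
  simp [startMat]

lemma adjMat_row_sum (X : SerreGraph) (i : X.V) : ∑ j, X.adjMat i j = X.deg i := by
  simp only [adjMat, Matrix.mul_apply, deg]
  rw [Finset.sum_comm]
  simp [startMat, endMat]

lemma lapl_col_sum (X : SerreGraph) (j : X.V) : ∑ i, (X.degMat - X.adjMat) i j = 0 := by
  simp only [Matrix.sub_apply, adjMat, degMat, Matrix.mul_apply, Finset.sum_sub_distrib]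
  rw [Finset.sum_comm, Finset.sum_comm (s := Finset.univ (α := X.V)) (t := Finset.univ (α := X.H))
    (f := fun i h => X.startMat i h * X.endMatᵀ h j)]
  simp only [startMat, endMat, Matrix.of_apply, Matrix.transpose_apply, ← Finset.sum_mul,
    Finset.sum_ite_eq, Finset.mem_univ, if_true, one_mul]
  rw [X.sum_half, X.sum_half, sub_eq_zero]
  exact Finset.sum_congr rfl fun e _ => by rw [X.inv_inv, add_comm]

/-- The cofactor of `1 - s` in `det (I - sA + s²(Q - I))`: the row sums of this matrix are
`(1 - s)(1 - s(q - 1))`, and here they replace the column of `r`, divided by `1 - s`. -/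
noncomputable def cofac (X : SerreGraph) (r : X.V) (s : ℝ) : ℝ :=
  ((X.bassMat s).updateCol r fun v => 1 - s * (X.deg v - 1)).det

lemma det_bassMat (X : SerreGraph) (r : X.V) (s : ℝ) :
    (X.bassMat s).det = (1 - s) * X.cofac r s := by
  have h := Matrix.det_updateCol_sum (X.bassMat s) r (fun _ => 1)
  have h2 : (fun k => ∑ i, (1 : ℝ) • X.bassMat s k i) =
      (1 - s) • fun v => 1 - s * (X.deg v - 1) := by
    ext k
    simp only [bassMat, Matrix.add_apply, Matrix.sub_apply, Matrix.smul_apply, smul_eq_mul,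
      Finset.sum_add_distrib, Finset.sum_sub_distrib, ← Finset.mul_sum, one_mul,
      degMat_row_sum, adjMat_row_sum, Pi.smul_apply]
    simp [Matrix.one_apply]
    ring
  rw [h2, Matrix.det_updateCol_smul, one_smul] at h
  exact h.symm

/-- Adding all rows to the row of `r` leaves in that row only the diagonal entry
`∑ (2 - q_v) = 2|V| - 2|E|`; the complementary minor is that of the Laplacian. -/
lemma cofac_one (X : SerreGraph) (r : X.V) :
    X.cofac r 1 =
      2 * ((Fintype.card X.V : ℝ) - Fintype.card X.Edge) * X.numSpanningTrees := by
  have h0 : X.bassMat 1 = X.degMat - X.adjMat := by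
    simp [bassMat]
    abel
  rw [cofac, h0]
  set A := (X.degMat - X.adjMat).updateCol r fun v => 1 - 1 * (X.deg v - 1) with hA
  have h1 := Matrix.det_updateRow_sum A r (fun _ => 1)
  rw [one_smul] at h1
  have hrow : ∀ j, j ≠ r → ∑ k, A k j = 0 := by
    intro j hj
    rw [← X.lapl_col_sum j]
    exact Finset.sum_congr rfl fun k _ => by rw [hA, Matrix.updateCol_ne hj]
  have hr : ∑ k, A k r = 2 * ((Fintype.card X.V : ℝ) - Fintype.card X.Edge) := by
    have : ∀ k, A k r = 2 - X.deg k := fun k => by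
      rw [hA, Matrix.updateCol_self]
      ring
    simp only [this, Finset.sum_sub_distrib, sum_deg]
    simp
    ring
  rw [← h1, Matrix.twoBlockTriangular_det _ (fun v => v ≠ r)]
  · have e1 : Matrix.toSquareBlockProp (A.updateRow r (∑ k, (1 : ℝ) • A k)) (fun v => v ≠ r) =
        Matrix.toSquareBlockProp (X.degMat - X.adjMat) fun v => v ≠ r := by
      ext i j
      simp only [Matrix.toSquareBlockProp_def, Matrix.of_apply]
      rw [Matrix.updateRow_ne i.2, hA, Matrix.updateCol_ne j.2]
    have : Subsingleton {v // ¬ v ≠ r} :=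
      ⟨fun a b => Subtype.ext ((not_not.1 a.2).trans (not_not.1 b.2).symm)⟩
    rw [e1, matrixTree, Matrix.det_eq_elem_of_subsingleton _ ⟨r, not_not.2 rfl⟩]
    simp only [Matrix.toSquareBlockProp_def, Matrix.of_apply, Matrix.updateRow_self, one_smul]
    rw [show (∑ x, A x) r = ∑ k, A k r from Finset.sum_apply _ _ _, hr]
    ring
  · intro i hi j hj
    obtain rfl : i = r := not_not.1 hi
    simp only [Matrix.updateRow_self, one_smul]
    exact (Finset.sum_apply _ _ _).trans (hrow j hj)

lemma differentiable_cofac (X : SerreGraph) (r : X.V) : Differentiable ℝ (X.cofac r) := by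
  unfold cofac
  simp only [Matrix.det_apply']
  refine Differentiable.fun_sum fun σ _ => .const_mul (.fun_finsetProd fun i _ => ?_) _
  by_cases hi : i = r
  · subst hi
    simp only [Matrix.updateCol_self]
    fun_prop
  · simp only [Matrix.updateCol_ne hi, bassMat, Matrix.add_apply, Matrix.sub_apply,
      Matrix.smul_apply]
    fun_prop

lemma continuous_zetaInv (X : SerreGraph) : Continuous X.zetaInv := by
  have : X.zetaInv = fun s => (1 + s • X.invMat - s • (X.endMatᵀ * X.startMat)).det :=
    funext X.zetaInv_eq
  rw [this]
  exact Continuous.matrix_det (by fun_prop)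

/-- Bass's formula with the powers of `1 - s²` cancelled against those of the genus; the factor
`1 + s` avoids the exponent `g - 1`, which is negative for a tree. -/
lemma zetaInv_factor (X : SerreGraph) (hX : X.Connected) (r : X.V) {s : ℝ}
    (hs : s ∈ Set.Ioi (0 : ℝ)) :
    (1 + s) * X.zetaInv s = (1 - s ^ 2) ^ X.genus * X.cofac r s := by
  have hne : ∀ s ∈ Set.Ioi (0 : ℝ), s ≠ 1 →
      (1 + s) * X.zetaInv s = (1 - s ^ 2) ^ X.genus * X.cofac r s := by
    intro s hs h1
    have h2 : 1 - s ≠ 0 := sub_ne_zero.2 (Ne.symm h1)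
    have h3 : 1 - s ^ 2 ≠ 0 := by
      have : (1 - s ^ 2) = (1 - s) * (1 + s) := by ring
      rw [this]
      exact mul_ne_zero h2 (by have : 0 < s := hs; positivity)
    have hb := X.bass s h3
    rw [X.det_bassMat r] at hb
    have hg := X.card_edge_add_one hX
    have h4 : (1 - s ^ 2) ^ Fintype.card X.Edge * (1 - s ^ 2) =
        (1 - s ^ 2) ^ Fintype.card X.V * (1 - s ^ 2) ^ X.genus := by
      rw [← pow_succ, hg, pow_add]
    refine mul_left_cancel₀ (mul_ne_zero (pow_ne_zero (Fintype.card X.V) h3) h2) ?_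
    linear_combination (1 - s ^ 2) * hb + (1 - s) * X.cofac r s * h4
  by_cases h1 : s = 1
  · -- both sides are continuous, so the identity extends from the punctured neighbourhood
    subst h1
    have hc1 : Continuous fun s => (1 + s) * X.zetaInv s :=
      (by fun_prop : Continuous fun s : ℝ => 1 + s).mul X.continuous_zetaInv
    have hc2 : Continuous fun s => (1 - s ^ 2) ^ X.genus * X.cofac r s :=
      (by fun_prop : Continuous fun s : ℝ => (1 - s ^ 2) ^ X.genus).mul
        (X.differentiable_cofac r).continuous
    refine tendsto_nhds_unique_of_eventuallyEq
      ((hc1.tendsto 1).mono_left (nhdsWithin_le_nhds (s := {1}ᶜ)))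
      ((hc2.tendsto 1).mono_left nhdsWithin_le_nhds) ?_
    filter_upwards [self_mem_nhdsWithin, nhdsWithin_le_nhds (Ioi_mem_nhds one_pos)] with s h1 h2
    exact hne s h2 h1
  · exact hne s hs h1

end SerreGraph

open SerreGraph Asymptotics in
/-- **Proposition (Northshield).** For a finite connected graph `X` of genus `g`, the
reciprocal of the Ihara zeta function has Taylor expansion
`ζ(s, X)⁻¹ = 2^g (-1)^{g+1} (g-1) |Jac(X)| (s-1)^g + O((s-1)^{g+1})` at `s = 1`, where
`|Jac(X)|` is the number of spanning trees of `X`. -/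
theorem zetaInv_taylor_at_one (X : SerreGraph) (hX : X.Connected) :
    (fun s : ℝ => X.zetaInv s -
        2 ^ X.genus * (-1 : ℝ) ^ (X.genus + 1) * ((X.genus : ℝ) - 1) *
          (X.numSpanningTrees : ℝ) * (s - 1) ^ X.genus)
      =O[nhds 1] fun s : ℝ => (s - 1) ^ (X.genus + 1) := by
  obtain ⟨r⟩ := hX.1
  -- near `1`, `ζ⁻¹ = (s - 1) ^ g * H s` with `H` differentiable
  let H : ℝ → ℝ := fun s => (-1) ^ X.genus * (1 + s) ^ X.genus * X.cofac r s / (1 + s)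
  have hH : DifferentiableAt ℝ H 1 := by
    have := X.differentiable_cofac r 1
    exact ((by fun_prop : DifferentiableAt ℝ
      (fun s : ℝ => (-1) ^ X.genus * (1 + s) ^ X.genus) 1).mul this).div
      (by fun_prop) (by norm_num)
  have hH1 : H 1 = 2 ^ X.genus * (-1 : ℝ) ^ (X.genus + 1) * ((X.genus : ℝ) - 1) *
      (X.numSpanningTrees : ℝ) := by
    have hg : (Fintype.card X.Edge : ℝ) + 1 = Fintype.card X.V + X.genus := by
      exact_mod_cast X.card_edge_add_one hX
    have : (Fintype.card X.V : ℝ) - Fintype.card X.Edge = 1 - X.genus := by linarith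
    simp only [H, X.cofac_one r, this]
    rw [one_add_one_eq_two, pow_succ]
    ring
  have hz : ∀ᶠ s in nhds (1 : ℝ), (s - 1) ^ X.genus * (H s - H 1) = X.zetaInv s -
      2 ^ X.genus * (-1 : ℝ) ^ (X.genus + 1) * ((X.genus : ℝ) - 1) *
        (X.numSpanningTrees : ℝ) * (s - 1) ^ X.genus := by
    filter_upwards [Ioi_mem_nhds (one_pos : (0 : ℝ) < 1)] with s hs
    have hs' : 1 + s ≠ 0 := by have : 0 < s := hs; positivity
    have h2 : X.zetaInv s = (1 - s ^ 2) ^ X.genus * X.cofac r s / (1 + s) := by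
      rw [eq_div_iff hs', mul_comm, X.zetaInv_factor hX r hs]
    have h3 : (1 - s ^ 2) ^ X.genus = (s - 1) ^ X.genus * ((-1) ^ X.genus * (1 + s) ^ X.genus) := by
      rw [← mul_pow, ← mul_pow]
      ring
    rw [← hH1, h2, h3]
    simp only [H]
    ring
  refine Asymptotics.IsBigO.congr' ?_ hz (Filter.EventuallyEq.refl _ _)
  simp only [pow_succ]
  exact (Asymptotics.isBigO_refl _ _).mul hH.isBigO_sub
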